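/- Let T > 0 and let D ⊂ ℝ^d (d ≥ 1) be a bounded open set with Lebesgue measure |D| > 0, closure D̄, and boundary ∂D. Let k > 0, γ ≥ 0, δ ≥ 0, η ≥ 0 be constants and let p, q, n > 1 and m ≥ 0 be exponents with m + n ≥ q ≥ p. Let λ₁ > 0 and let φ : D̄ → ℝ be continuous, twice continuously differentiable on D, with φ(x) > 0 for x ∈ D, φ(x) = 0 for x ∈ ∂D, −Δφ(x) = λ₁·φ(x) for x ∈ D, and ∫_D φ(x) dx = 1; set C₁ = sup_{x∈D} φ(x). Let β : [0,T] → ℝ be continuous with β*(t) = sup_{0≤s≤t}|β(s)|, and let b > 1 satisfy, for all t ∈ [0,T]: b^{q−p}·e^{−η(m+n−1)β*(t)} ≥ (k·C₁^p + λ₁·C₁)·|D|^{q−1}. Let v : [0,T] × D̄ → ℝ be continuous and nonnegative, with ∂v/∂t continuous and v(t,·) twice continuously differentiable in x on (0,T] × D, satisfying for all (t,x) ∈ (0,T] × D: ∂v/∂t(t,x) = Δv(t,x) + γ·v(t,x) + e^{(q−1)ηβ(t)}·∫_D v(t,y)^q dy − k·e^{(p−1)ηβ(t)}·v(t,x)^p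 + δ·e^{(m+n−1)ηβ(t)}·v(t,x)^m·∫_D v(t,y)^n dy, with v(t,x) = 0 for x ∈ ∂D, t ∈ (0,T], and v(0,x) ≥ b·φ(x) for x ∈ D. Then v(t,x) ≥ b·φ(x) for all (t,x) ∈ [0,T] × D̄. -/

import Mathlib

open MeasureTheory Real Set

/-- The Laplacian in the spatial variable: `Δf(x) = ∑ i, ∂²f(x)/∂xᵢ²`. -/
noncomputable def laplacian {d : ℕ} (f : EuclideanSpace ℝ (Fin d) → ℝ)
    (x : EuclideanSpace ℝ (Fin d)) : ℝ :=
  ∑ i, fderiv ℝ (fun y => fderiv ℝ f y (EuclideanSpace.single i 1)) x (EuclideanSpace.single i 1)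

/-- The tangent line inequality for the convex function `x ↦ x ^ q` on `[0, ∞)`. -/
theorem rpow_tangent_le {q x a : ℝ} (hq : 1 < q) (hx : 0 ≤ x) (ha : 0 ≤ a) :
    a ^ q + q * a ^ (q - 1) * (x - a) ≤ x ^ q := by
  rcases ha.eq_or_lt with rfl | ha
  · rw [zero_rpow (by linarith), zero_rpow (by linarith)]
    simpa using rpow_nonneg hx q
  · have h := one_add_mul_self_le_rpow_one_add (s := x / a - 1)
      (by have := div_nonneg hx ha.le; linarith) hq.le
    rw [add_sub_cancel, div_rpow hx ha.le, le_div_iff₀ (rpow_pos_of_pos ha q)] at h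
    have h2 : a ^ q = a ^ (q - 1) * a := by
      rw [← rpow_add_one ha.ne', sub_add_cancel]
    calc a ^ q + q * a ^ (q - 1) * (x - a) = (1 + q * (x / a - 1)) * a ^ q := by
          rw [h2]; field_simp
      _ ≤ x ^ q := h

/-- The derivative is nonpositive at the right endpoint of an interval where the minimum is
attained. -/
theorem HasDerivAt.nonpos_of_forall_le_left {f : ℝ → ℝ} {f' a t : ℝ} (hf : HasDerivAt f f' t)
    (hat : a < t) (hmin : ∀ s ∈ Ioo a t, f t ≤ f s) : f' ≤ 0 := by
  have h := (hasDerivWithinAt_iff_tendsto_slope' (s := Iio t) (by simp)).1 hf.hasDerivWithinAt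
  refine le_of_tendsto h ?_
  filter_upwards [Ioo_mem_nhdsLT hat] with s hs
  rw [slope_def_field]
  exact div_nonpos_of_nonneg_of_nonpos (sub_nonneg.2 (hmin s hs)) (by linarith [hs.2])

/-- The second derivative is nonnegative at a local minimum. -/
theorem IsLocalMin.deriv_deriv_nonneg {g : ℝ → ℝ} {x : ℝ} (hg : IsLocalMin g x)
    (hc : ContinuousAt g x) : 0 ≤ deriv (deriv g) x := by
  by_contra! hneg
  have hmax := isLocalMax_of_deriv_deriv_neg hneg hg.deriv_eq_zero hc
  have heq : g =ᶠ[nhds x] fun _ => g x := by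
    filter_upwards [hg, hmax] with y h1 h2 using le_antisymm h2 h1
  have h0 := heq.deriv.deriv_eq
  simp at h0
  linarith

theorem ContDiffAt.differentiableAt_fderiv_apply {E : Type*} [NormedAddCommGroup E]
    [NormedSpace ℝ E] {f : E → ℝ} {x : E} (hf : ContDiffAt ℝ 2 f x) (e : E) :
    DifferentiableAt ℝ (fun y => fderiv ℝ f y e) x :=
  ((hf.fderiv_right (m := 1) (by norm_num)).differentiableAt (by norm_num)).clm_apply
    (differentiableAt_const e)

theorem laplacian_sub_const_mul {d : ℕ} {f g : EuclideanSpace ℝ (Fin d) → ℝ}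
    {x : EuclideanSpace ℝ (Fin d)} (hf : ContDiffAt ℝ 2 f x) (hg : ContDiffAt ℝ 2 g x) (c : ℝ) :
    laplacian (fun y => f y - c * g y) x = laplacian f x - c * laplacian g x := by
  unfold laplacian
  rw [Finset.mul_sum, ← Finset.sum_sub_distrib]
  refine Finset.sum_congr rfl fun i _ => ?_
  set e : EuclideanSpace ℝ (Fin d) := EuclideanSpace.single i 1
  have hev : (fun y => fderiv ℝ (fun y => f y - c * g y) y e) =ᶠ[nhds x]
      fun y => fderiv ℝ f y e - c * fderiv ℝ g y e := by
    filter_upwards [hf.eventually (by simp), hg.eventually (by simp)] with y h1 h2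
    have h1 := h1.differentiableAt (by norm_num)
    have h2 := h2.differentiableAt (by norm_num)
    rw [(h1.hasFDerivAt.fun_sub (h2.hasFDerivAt.const_mul c)).fderiv]
    simp
  rw [hev.fderiv_eq, ((hf.differentiableAt_fderiv_apply e).hasFDerivAt.fun_sub
    ((hg.differentiableAt_fderiv_apply e).hasFDerivAt.const_mul c)).fderiv]
  simp

theorem laplacian_nonneg_of_isLocalMin {d : ℕ} {f : EuclideanSpace ℝ (Fin d) → ℝ}
    {x : EuclideanSpace ℝ (Fin d)} (hf : ContDiffAt ℝ 2 f x) (hmin : IsLocalMin f x) :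
    0 ≤ laplacian f x := by
  unfold laplacian
  refine Finset.sum_nonneg fun i _ => ?_
  set e : EuclideanSpace ℝ (Fin d) := EuclideanSpace.single i 1
  have hline : ∀ s : ℝ, HasDerivAt (fun s : ℝ => x + s • e) e s := fun s => by
    simpa using ((hasDerivAt_id s).smul_const e).const_add x
  have hx0 : x + (0 : ℝ) • e = x := by simp
  have htend : Filter.Tendsto (fun s : ℝ => x + s • e) (nhds 0) (nhds x) := by
    simpa using (hline 0).continuousAt.tendsto
  have hd1 : deriv (fun s : ℝ => f (x + s • e)) =ᶠ[nhds 0]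
      fun s => fderiv ℝ f (x + s • e) e := by
    filter_upwards [htend.eventually (hf.eventually (by simp))] with s hs
    exact ((hs.differentiableAt (by norm_num)).hasFDerivAt.comp_hasDerivAt s (hline s)).deriv
  have hd2 : HasDerivAt (fun s : ℝ => fderiv ℝ f (x + s • e) e)
      (fderiv ℝ (fun y => fderiv ℝ f y e) x e) 0 := by
    have h := (hf.differentiableAt_fderiv_apply e).hasFDerivAt
    rw [← hx0] at h
    have h := h.comp_hasDerivAt (0 : ℝ) (hline 0)
    rwa [hx0] at h
  rw [← hd2.deriv, ← hd1.deriv_eq]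
  refine IsLocalMin.deriv_deriv_nonneg ?_ ?_
  · have := htend.eventually hmin
    filter_upwards [this] with s hs
    simpa using hs
  · exact ContinuousAt.comp (f := fun s : ℝ => x + s • e) (by rw [hx0]; exact hf.continuousAt)
      (hline 0).continuousAt

/-- Jensen's inequality for `x ↦ x ^ q` and a density of total mass one. -/
theorem measureReal_rpow_le_setIntegral_rpow {α : Type*} [MeasurableSpace α] {μ : Measure α}
    {D : Set α} {φ : α → ℝ} {q : ℝ} (hq : 1 < q) (hD : MeasurableSet D)
    (hpos : 0 < (μ D).toReal) (hφ : ∀ x ∈ D, 0 ≤ φ x) (hi : IntegrableOn φ D μ)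
    (hiq : IntegrableOn (fun x => φ x ^ q) D μ) (h1 : ∫ x in D, φ x ∂μ = 1) :
    (μ D).toReal ^ (1 - q) ≤ ∫ x in D, φ x ^ q ∂μ := by
  set V := (μ D).toReal with hV
  have hfin : IsFiniteMeasure (μ.restrict D) :=
    ⟨by simpa using (ENNReal.toReal_pos_iff.1 hpos).2⟩
  have hlin : Integrable (fun x => q * V⁻¹ ^ (q - 1) * (φ x - V⁻¹)) (μ.restrict D) :=
    (hi.sub (integrable_const _)).const_mul _
  have h := setIntegral_mono_on ((integrable_const (V⁻¹ ^ q)).add hlin) hiq hD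
    fun x hx => rpow_tangent_le hq (hφ x hx) (inv_nonneg.2 hpos.le)
  refine le_trans (le_of_eq ?_) h
  simp only [Pi.add_apply]
  rw [integral_add (integrable_const _) hlin, integral_const_mul,
    integral_sub hi (integrable_const _), h1]
  simp only [integral_const, measureReal_def, Measure.restrict_apply_univ, smul_eq_mul, ← hV]
  rw [mul_inv_cancel₀ hpos.ne', sub_self, mul_zero, add_zero, inv_rpow hpos.le, ← rpow_neg hpos.le,
    sub_eq_add_neg, rpow_add hpos, rpow_one]

/-- The spatial profile bounded by `C` satisfies the pointwise subsolution inequality, where `B`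
bounds the absolute value of the noise `s` and `V` is the volume of the domain. -/
theorem subsolution_inequality {k η p q r lam b C V s B f J : ℝ} (hk : 0 < k) (hη : 0 ≤ η)
    (hp : 1 < p) (hpq : p ≤ q) (hqr : q ≤ r) (hlam : 0 < lam) (hb : 1 < b) (hV : 0 < V)
    (hs : |s| ≤ B) (hf : 0 ≤ f) (hfC : f ≤ C) (hJ : V ^ (1 - q) ≤ J)
    (hcond : (k * C ^ p + lam * C) * V ^ (q - 1) ≤ b ^ (q - p) * exp (-(η * (r - 1) * B))) :
    lam * (b * f) + k * exp ((p - 1) * η * s) * (b * f) ^ p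
      ≤ exp ((q - 1) * η * s) * (b ^ q * J) := by
  have hb0 : 0 < b := by linarith
  have hC : 0 ≤ C := hf.trans hfC
  have hB : 0 ≤ B := (abs_nonneg s).trans hs
  have hsB : -s ≤ B := (neg_le_abs s).trans hs
  set E := exp ((q - 1) * η * s) with hE
  set R := exp (η * (r - 1) * B) with hR
  have hbp : b ≤ b ^ p := by simpa using rpow_le_rpow_of_exponent_le hb.le hp.le
  -- the exponential factors
  have hexp : ∀ a, 0 ≤ a → a ≤ r - 1 → -(a * (η * s)) ≤ η * (r - 1) * B := fun a ha har => by
    calc -(a * (η * s)) = a * η * (-s) := by ring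
      _ ≤ a * η * B := by gcongr
      _ ≤ (r - 1) * η * B := by gcongr
      _ = _ := by ring
  have e1 : 1 ≤ E * R := by
    rw [hE, hR, ← exp_add]
    exact one_le_exp (by linarith [hexp (q - 1) (by linarith) (by linarith)])
  have e2 : exp ((p - 1) * η * s) ≤ E * R := by
    rw [hE, hR, ← exp_add]
    exact exp_le_exp.2 (by linarith [hexp (q - p) (by linarith) (by linarith)])
  have hE0 : 0 < E := exp_pos _
  have hR0 : 0 < R := exp_pos _
  have hmain : R * b ^ p * (k * C ^ p + lam * C) ≤ b ^ q * V ^ (1 - q) := by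
    have hVV : V ^ (q - 1) * V ^ (1 - q) = 1 := by rw [← rpow_add hV]; simp
    have hRR : R * exp (-(η * (r - 1) * B)) = 1 := by rw [hR, ← exp_add]; simp
    have hbb : b ^ p * b ^ (q - p) = b ^ q := by rw [← rpow_add hb0]; simp
    calc R * b ^ p * (k * C ^ p + lam * C)
        = R * b ^ p * ((k * C ^ p + lam * C) * V ^ (q - 1)) * V ^ (1 - q) := by
          linear_combination (-(R * b ^ p * (k * C ^ p + lam * C))) * hVV
      _ ≤ R * b ^ p * (b ^ (q - p) * exp (-(η * (r - 1) * B))) * V ^ (1 - q) := by gcongr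
      _ = (R * exp (-(η * (r - 1) * B))) * (b ^ p * b ^ (q - p)) * V ^ (1 - q) := by ring
      _ = b ^ q * V ^ (1 - q) := by rw [hRR, hbb, one_mul]
  have t1 : lam * (b * f) ≤ E * R * b ^ p * (lam * C) := by
    calc lam * (b * f) ≤ lam * (b ^ p * C) := by gcongr
      _ = 1 * (b ^ p * (lam * C)) := by ring
      _ ≤ E * R * (b ^ p * (lam * C)) := by gcongr
      _ = _ := by ring
  have t2 : k * exp ((p - 1) * η * s) * (b * f) ^ p ≤ E * R * b ^ p * (k * C ^ p) := by
    rw [mul_rpow hb0.le hf]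
    calc k * exp ((p - 1) * η * s) * (b ^ p * f ^ p)
        ≤ k * (E * R) * (b ^ p * C ^ p) := by gcongr
      _ = _ := by ring
  calc _ ≤ E * R * b ^ p * (lam * C) + E * R * b ^ p * (k * C ^ p) := add_le_add t1 t2
    _ = E * (R * b ^ p * (k * C ^ p + lam * C)) := by ring
    _ ≤ E * (b ^ q * V ^ (1 - q)) := by gcongr
    _ ≤ _ := by gcongr

/-- Under the first condition of (B1), the solution `v` of the transformed random
PDE with initial datum at least `b·φ` stays above `b·φ`, where `φ` is the first
(normalized) Dirichlet eigenfunction of `−Δ` with eigenvalue `λ₁`. -/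
theorem statement15 {d : ℕ} (hd : 1 ≤ d) {T : ℝ} (hT : 0 < T)
    {D : Set (EuclideanSpace ℝ (Fin d))} (hDopen : IsOpen D)
    (hDbdd : Bornology.IsBounded D) (hD0 : 0 < volume D)
    {k γ δ η : ℝ} (hk : 0 < k) (hγ : 0 ≤ γ) (hδ : 0 ≤ δ) (hη : 0 ≤ η)
    {p q n m : ℝ} (hp : 1 < p) (hq : 1 < q) (hn : 1 < n) (hm : 0 ≤ m)
    (hpq : p ≤ q) (hqmn : q ≤ m + n)
    (lam1 : ℝ) (hlam : 0 < lam1)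
    (φ : EuclideanSpace ℝ (Fin d) → ℝ)
    -- `φ` is the first (normalized) Dirichlet eigenfunction of `−Δ` on `D`
    (hφ_cont : ContinuousOn φ (closure D))
    (hφ_smooth : ContDiffOn ℝ 2 φ D)
    (hφ_pos : ∀ x ∈ D, 0 < φ x)
    (hφ_bdry : ∀ x ∈ frontier D, φ x = 0)
    (hφ_eig : ∀ x ∈ D, -laplacian φ x = lam1 * φ x)
    (hφ_int : (∫ x in D, φ x) = 1)
    (C₁ : ℝ) (hC₁ : C₁ = ⨆ x : D, φ (x : EuclideanSpace ℝ (Fin d)))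
    (β : ℝ → ℝ) (hβ : ContinuousOn β (Icc 0 T))
    (b : ℝ) (hb : 1 < b)
    -- the first condition of (B1), with `β*(t) = sup_{0≤s≤t}|β(s)|`
    (hcond : ∀ t ∈ Icc 0 T,
      (k * C₁ ^ p + lam1 * C₁) * (volume D).toReal ^ (q - 1)
        ≤ b ^ (q - p) * exp (-(η * (m + n - 1) * (⨆ s : Icc (0:ℝ) t, |β (s : ℝ)|))))
    (v vt : ℝ → EuclideanSpace ℝ (Fin d) → ℝ)
    -- `v` is continuous and nonnegative on `[0,T] × D̄`
    (hv_cont : ContinuousOn (fun pr : ℝ × EuclideanSpace ℝ (Fin d) => v pr.1 pr.2)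
      (Icc 0 T ×ˢ closure D))
    (hv_nn : ∀ t ∈ Icc 0 T, ∀ x ∈ closure D, 0 ≤ v t x)
    -- the time derivative `∂v/∂t = vt` exists and is continuous on `(0,T] × D`
    (hv_t : ∀ t ∈ Ioc 0 T, ∀ x ∈ D, HasDerivAt (fun s => v s x) (vt t x) t)
    (hvt_cont : ContinuousOn (fun pr : ℝ × EuclideanSpace ℝ (Fin d) => vt pr.1 pr.2)
      (Ioc 0 T ×ˢ D))
    (hv_x : ∀ t ∈ Ioc 0 T, ContDiffOn ℝ 2 (v t) D)
    -- `v` solves the transformed PDE on `(0,T] × D`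
    (hv_pde : ∀ t ∈ Ioc 0 T, ∀ x ∈ D,
      vt t x = laplacian (v t) x + γ * v t x
        + exp ((q - 1) * η * β t) * (∫ y in D, v t y ^ q)
        - k * exp ((p - 1) * η * β t) * v t x ^ p
        + δ * exp ((m + n - 1) * η * β t) * v t x ^ m * (∫ y in D, v t y ^ n))
    (hv_bdry : ∀ t ∈ Ioc 0 T, ∀ x ∈ frontier D, v t x = 0)
    (hv_init : ∀ x ∈ D, b * φ x ≤ v 0 x) :
    ∀ t ∈ Icc 0 T, ∀ x ∈ closure D, b * φ x ≤ v t x := by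
  have hb0 : 0 < b := by linarith
  have hcomp : IsCompact (closure D) := hDbdd.isCompact_closure
  have hsub : D ⊆ closure D := subset_closure
  have hmeas : MeasurableSet D := hDopen.measurableSet
  have hDfin : volume D < ⊤ := hDbdd.measure_lt_top
  have hV : 0 < (volume D).toReal := ENNReal.toReal_pos hD0.ne' hDfin.ne
  obtain ⟨x₁, hx₁⟩ : D.Nonempty := nonempty_of_measure_ne_zero hD0.ne'
  have hint : ∀ {f : EuclideanSpace ℝ (Fin d) → ℝ}, ContinuousOn f (closure D) →
      IntegrableOn f D := fun hf => (hf.integrableOn_compact hcomp).mono_set hsub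
  have hφC : ∀ x ∈ D, φ x ≤ C₁ := fun x hx => by
    rw [hC₁]
    refine le_ciSup (f := fun x : D => φ x) ?_ ⟨x, hx⟩
    refine (hcomp.bddAbove_image hφ_cont).mono ?_
    rintro _ ⟨y, rfl⟩
    exact ⟨y, hsub y.2, rfl⟩
  have hC0 : 0 < C₁ := (hφ_pos x₁ hx₁).trans_le (hφC x₁ hx₁)
  have hbdry : ∀ t ∈ Icc 0 T, ∀ x ∈ closure D, x ∉ D → b * φ x ≤ v t x := fun t ht x hx hxD => by
    rw [hφ_bdry x ⟨hx, by rwa [hDopen.interior_eq]⟩, mul_zero]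
    exact hv_nn t ht x hx
  have hφq : ContinuousOn (fun x => φ x ^ q) (closure D) :=
    hφ_cont.rpow_const fun _ _ => Or.inr (by linarith)
  have hJ := measureReal_rpow_le_setIntegral_rpow hq hmeas hV (fun x hx => (hφ_pos x hx).le)
    (hint hφ_cont) (hint hφq) hφ_int
  obtain ⟨S, hS⟩ := isCompact_Icc.exists_bound_of_continuousOn hβ
  set K := exp ((q - 1) * η * S) * ((volume D).toReal * (q * (b * C₁) ^ (q - 1))) + 1 with hK
  -- a minimum point of the weighted difference
  have hWc : ContinuousOn (fun pr : ℝ × EuclideanSpace ℝ (Fin d) =>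
      exp (-K * pr.1) * (v pr.1 pr.2 - b * φ pr.2)) (Icc 0 T ×ˢ closure D) := by
    refine ContinuousOn.mul (by fun_prop) (hv_cont.sub (continuousOn_const.mul ?_))
    exact hφ_cont.comp continuousOn_snd fun pr hpr => hpr.2
  obtain ⟨⟨t₀, x₀⟩, ⟨ht₀, hx₀⟩, hmin⟩ := (isCompact_Icc.prod hcomp).exists_isMinOn
    ⟨(0, x₁), ⟨left_mem_Icc.2 hT.le, hsub hx₁⟩⟩ hWc
  rw [isMinOn_iff] at hmin
  simp only at ht₀ hx₀ hmin
  suffices hw : 0 ≤ v t₀ x₀ - b * φ x₀ by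
    intro t ht x hx
    have h := (mul_nonneg (exp_pos (-K * t₀)).le hw).trans (hmin (t, x) ⟨ht, hx⟩)
    exact sub_nonneg.1 (nonneg_of_mul_nonneg_right h (exp_pos _))
  by_contra! hneg
  set w₀ := v t₀ x₀ - b * φ x₀ with hw₀
  have hxD : x₀ ∈ D := by
    by_contra h
    linarith [hbdry t₀ ht₀ x₀ hx₀ h]
  have ht0 : t₀ ∈ Ioc 0 T := by
    refine ⟨ht₀.1.lt_of_ne ?_, ht₀.2⟩
    rintro rfl
    linarith [hv_init x₀ hxD]
  have hnhds : D ∈ nhds x₀ := hDopen.mem_nhds hxD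
  have hspace : ∀ x ∈ closure D, w₀ ≤ v t₀ x - b * φ x := fun x hx =>
    le_of_mul_le_mul_left (hmin (t₀, x) ⟨ht₀, hx⟩) (exp_pos _)
  have htime : vt t₀ x₀ ≤ K * w₀ := by
    have hd : HasDerivAt (fun s => exp (-K * s) * (v s x₀ - b * φ x₀))
        (exp (-K * t₀) * (-K) * (v t₀ x₀ - b * φ x₀) + exp (-K * t₀) * vt t₀ x₀) t₀ := by
      refine HasDerivAt.mul ?_ ((hv_t t₀ ht0 x₀ hxD).sub_const _)
      simpa using ((hasDerivAt_id t₀).const_mul (-K)).exp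
    have h := hd.nonpos_of_forall_le_left ht0.1 fun s hs =>
      hmin (s, x₀) ⟨⟨hs.1.le, hs.2.le.trans ht0.2⟩, hx₀⟩
    have h' : exp (-K * t₀) * (vt t₀ x₀ - K * w₀) ≤ 0 := by rw [hw₀]; linarith
    linarith [nonpos_of_mul_nonpos_right h' (exp_pos _)]
  have hlap : -(lam1 * (b * φ x₀)) ≤ laplacian (v t₀) x₀ := by
    have hv2 := (hv_x t₀ ht0).contDiffAt hnhds
    have hφ2 := hφ_smooth.contDiffAt hnhds
    have h := laplacian_nonneg_of_isLocalMin (hv2.sub (contDiffAt_const.mul hφ2 :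
      ContDiffAt ℝ 2 (fun y => b * φ y) x₀)) (by
        filter_upwards [hnhds] with y hy using hspace y (hsub hy))
    have h := h.trans_eq (laplacian_sub_const_mul hv2 hφ2 b)
    linear_combination h + b * hφ_eig x₀ hxD
  have hvc : ContinuousOn (v t₀) (closure D) :=
    hv_cont.comp (f := fun x => (t₀, x)) (by fun_prop) fun x hx => ⟨ht₀, hx⟩
  have hvq : ContinuousOn (fun x => v t₀ x ^ q) (closure D) :=
    hvc.rpow_const fun _ _ => Or.inr (by linarith)
  -- the nonlocal term
  have hnonloc : b ^ q * (∫ x in D, φ x ^ q)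
      + (volume D).toReal * (q * (b * C₁) ^ (q - 1)) * w₀ ≤ ∫ x in D, v t₀ x ^ q := by
    have hconst : IntegrableOn (fun _ => q * (b * C₁) ^ (q - 1) * w₀) D :=
      integrableOn_const hDfin.ne
    have h := setIntegral_mono_on (((hint hφq).const_mul (b ^ q)).add hconst) (hint hvq) hmeas
      fun x hx => by
        have hφx := hφ_pos x hx
        have hz : 0 ≤ b * φ x := by positivity
        refine le_trans ?_ (rpow_tangent_le hq (hv_nn t₀ ht₀ x (hsub hx)) hz)
        rw [Pi.add_apply, mul_rpow hb0.le hφx.le]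
        gcongr ?_ + ?_
        · exact le_rfl
        have hle : q * (b * φ x) ^ (q - 1) ≤ q * (b * C₁) ^ (q - 1) := by
          have := hφC x hx
          gcongr
        calc q * (b * C₁) ^ (q - 1) * w₀ ≤ q * (b * φ x) ^ (q - 1) * w₀ :=
              mul_le_mul_of_nonpos_right hle hneg.le
          _ ≤ _ := by
              gcongr
              exact hspace x (hsub hx)
    refine le_trans (le_of_eq ?_) h
    simp only [Pi.add_apply]
    rw [integral_add ((hint hφq).const_mul _) hconst, integral_const_mul]
    simp [measureReal_def, mul_assoc]
  have hβ' : |β t₀| ≤ ⨆ s : Icc (0 : ℝ) t₀, |β (s : ℝ)| := by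
    refine le_ciSup (f := fun s : Icc (0 : ℝ) t₀ => |β s|) ⟨S, ?_⟩ ⟨t₀, right_mem_Icc.2 ht₀.1⟩
    rintro _ ⟨s, rfl⟩
    exact hS s ⟨s.2.1, s.2.2.trans ht₀.2⟩
  have hss := subsolution_inequality (r := m + n) hk hη hp hpq hqmn hlam hb hV hβ'
    (hφ_pos x₀ hxD).le (hφC x₀ hxD) hJ (hcond t₀ ht₀)
  have hv0 : 0 ≤ v t₀ x₀ := hv_nn t₀ ht₀ x₀ hx₀
  have hvp : k * exp ((p - 1) * η * β t₀) * v t₀ x₀ ^ p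
      ≤ k * exp ((p - 1) * η * β t₀) * (b * φ x₀) ^ p := by
    have : v t₀ x₀ ≤ b * φ x₀ := by linarith
    gcongr
  have hδt : 0 ≤ δ * exp ((m + n - 1) * η * β t₀) * v t₀ x₀ ^ m * ∫ y in D, v t₀ y ^ n := by
    have : 0 ≤ ∫ y in D, v t₀ y ^ n :=
      setIntegral_nonneg hmeas fun y hy => rpow_nonneg (hv_nn t₀ ht₀ y (hsub hy)) n
    positivity
  have hγt : 0 ≤ γ * v t₀ x₀ := mul_nonneg hγ hv0
  have hA : exp ((q - 1) * η * β t₀) ≤ exp ((q - 1) * η * S) := by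
    have : β t₀ ≤ S := (le_abs_self _).trans (hS t₀ ht₀)
    have : 0 ≤ q - 1 := by linarith
    gcongr
  have hN : (volume D).toReal * (q * (b * C₁) ^ (q - 1)) * w₀ ≤ 0 :=
    mul_nonpos_of_nonneg_of_nonpos (by positivity) hneg.le
  have hlow := mul_le_mul_of_nonneg_left hnonloc (exp_pos ((q - 1) * η * β t₀)).le
  have hAN := mul_le_mul_of_nonpos_right hA hN
  rw [hv_pde t₀ ht0 x₀ hxD, hK] at htime
  linarith
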